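/- Suppose A₁, A₂ ∈ A satisfy Hom_R(A₁,A₂) = 0 = Hom_R(A₂,A₁). Then E_{A₁} ⋆ F_{A₂} = F_{A₂} ⋆ E_{A₁} in DH(R). -/

import Mathlib

open CategoryTheory CategoryTheory.Limits Opposite

noncomputable section

universe u

variable (k : Type) [Field k] [Fintype k]
variable (R : Type u) [SmallCategory R] [Abelian R] [Linear k R] [EnoughProjectives R]

/-- The objects `A` of `R` such that `Hom(M, A)` is a finite set for every `M`. -/
def IsFinHom (A : R) : Prop := ∀ M : R, Finite (M ⟶ A)

/-- The Euler form `⟨M,A⟩ = dim Hom(M,A) - dim Ext¹(M,A)`. -/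
def euler (M A : R) : ℤ :=
  (Module.finrank k (M ⟶ A) : ℤ) -
    (Module.finrank k (((_root_.Ext k R 1).obj (op M)).obj A) : ℤ)

/-- The set of relations defining the Grothendieck group of `R`. -/
def sesSet : Set (FreeAbelianGroup R) :=
  {x | ∃ S : ShortComplex R, S.ShortExact ∧
    x = FreeAbelianGroup.of S.X₂ - FreeAbelianGroup.of S.X₁ - FreeAbelianGroup.of S.X₃}

/-- The Grothendieck group `K(R)`. -/
abbrev K0 := FreeAbelianGroup R ⧸ AddSubgroup.closure (sesSet R)

/-- The class of an object in `K(R)`. -/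
def K0.cls (X : R) : K0 R := QuotientAddGroup.mk (FreeAbelianGroup.of X)

/-- The set of relations defining the Grothendieck group of the subcategory `A`. -/
def sesSetA : Set (FreeAbelianGroup {A : R // IsFinHom R A}) :=
  {x | ∃ (S : ShortComplex R) (h1 : IsFinHom R S.X₁) (h2 : IsFinHom R S.X₂)
      (h3 : IsFinHom R S.X₃), S.ShortExact ∧
    x = FreeAbelianGroup.of ⟨S.X₂, h2⟩ - FreeAbelianGroup.of ⟨S.X₁, h1⟩ -
      FreeAbelianGroup.of ⟨S.X₃, h3⟩}

/-- The Grothendieck group `K(A)`. -/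
abbrev KA := FreeAbelianGroup {A : R // IsFinHom R A} ⧸ AddSubgroup.closure (sesSetA R)

/-- The class of an object of `A` in `K(A)`. -/
def KA.cls (A : {A : R // IsFinHom R A}) : KA R := QuotientAddGroup.mk (FreeAbelianGroup.of A)

/-- `R` is hereditary, i.e. of global dimension at most 1. -/
def Hereditary : Prop :=
  ∀ X Y : R, Subsingleton (((_root_.Ext k R 2).obj (op X)).obj Y)

/-- Condition (c): cancellation for projectives. -/
def CondC : Prop :=
  ∀ P Q M : R, Projective P → Projective Q → Projective M →
    Nonempty ((M ⊞ P) ≅ (M ⊞ Q)) → Nonempty (P ≅ Q)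

/-- Condition (d): every element of `K(R)` is a `ℚ`-linear combination of classes of
objects of `A`. -/
def CondD : Prop :=
  ∀ x : K0 R, ∃ n : ℕ, n ≠ 0 ∧ (n : ℤ) • x ∈
    AddSubgroup.closure (Set.range fun A : {A : R // IsFinHom R A} => K0.cls R A.1)

/-- Condition (e). -/
def CondE : Prop :=
  ∀ A B : R, IsFinHom R A → IsFinHom R B → K0.cls R A = K0.cls R B →
    ∀ P : R, Projective P → Nat.card (P ⟶ A) = Nat.card (P ⟶ B)

structure Z2Cx where
  X0 : R
  X1 : R
  d0 : X0 ⟶ X1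
  d1 : X1 ⟶ X0
  d01 : d0 ≫ d1 = 0
  d10 : d1 ≫ d0 = 0

namespace Z2Cx

variable {R}

/-- Morphisms of `ℤ/2`-graded complexes. -/
@[ext] structure Hom (M N : Z2Cx R) where
  f0 : M.X0 ⟶ N.X0
  f1 : M.X1 ⟶ N.X1
  comm0 : M.d0 ≫ f1 = f0 ≫ N.d0
  comm1 : M.d1 ≫ f0 = f1 ≫ N.d1

instance : CategoryStruct (Z2Cx R) where
  Hom := Hom
  id M := ⟨𝟙 _, 𝟙 _, by simp, by simp⟩
  comp {M N P} f g := ⟨f.f0 ≫ g.f0, f.f1 ≫ g.f1, by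
      rw [← Category.assoc, f.comm0, Category.assoc, g.comm0, Category.assoc], by
      rw [← Category.assoc, f.comm1, Category.assoc, g.comm1, Category.assoc]⟩

@[simp] lemma id_f0 (M : Z2Cx R) : (𝟙 M : Hom M M).f0 = 𝟙 M.X0 := rfl
@[simp] lemma id_f1 (M : Z2Cx R) : (𝟙 M : Hom M M).f1 = 𝟙 M.X1 := rfl
@[simp] lemma comp_f0 {M N P : Z2Cx R} (f : M ⟶ N) (g : N ⟶ P) :
    (f ≫ g).f0 = Hom.f0 f ≫ Hom.f0 g := rfl
@[simp] lemma comp_f1 {M N P : Z2Cx R} (f : M ⟶ N) (g : N ⟶ P) :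
    (f ≫ g).f1 = Hom.f1 f ≫ Hom.f1 g := rfl

instance : Category (Z2Cx R) where
  id_comp f := by apply Hom.ext <;> simp
  comp_id f := by apply Hom.ext <;> simp
  assoc f g h := by apply Hom.ext <;> simp

variable (R)

/-- The two-term complex `C_f` associated to a morphism `f`, concentrated so that
`X1 = P`, `X0 = Q`, `d1 = f`, `d0 = 0`. -/
def Cf {P Q : R} (f : P ⟶ Q) : Z2Cx R := ⟨Q, P, 0, f, by simp, by simp⟩

/-- The shift involution `†`: it interchanges the gradings and negates the differentials. -/
def dagger (M : Z2Cx R) : Z2Cx R :=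
  ⟨M.X1, M.X0, -M.d1, -M.d0, by simp [M.d10], by simp [M.d01]⟩

/-- The acyclic complex `K_P` with `d1 = 𝟙 P` and `d0 = 0`. -/
def KP (P : R) : Z2Cx R := ⟨P, P, 0, 𝟙 P, by simp, by simp⟩

/-- Direct sum of `ℤ/2`-graded complexes. -/
def dsum (M N : Z2Cx R) : Z2Cx R where
  X0 := M.X0 ⊞ N.X0
  X1 := M.X1 ⊞ N.X1
  d0 := biprod.map M.d0 N.d0
  d1 := biprod.map M.d1 N.d1
  d01 := by ext <;> simp [M.d01, N.d01]
  d10 := by ext <;> simp [M.d10, N.d10]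

/-- Degree `0` homology of a `ℤ/2`-graded complex. -/
def H0 (M : Z2Cx R) : R := (ShortComplex.mk M.d1 M.d0 M.d10).homology

/-- Degree `1` homology of a `ℤ/2`-graded complex. -/
def H1 (M : Z2Cx R) : R := (ShortComplex.mk M.d0 M.d1 M.d01).homology

/-- The homology complex `H•(M•)`, with zero differentials. -/
def Hcx (M : Z2Cx R) : Z2Cx R := ⟨H0 R M, H1 R M, 0, 0, by simp, by simp⟩

/-- A complex is acyclic if its homology vanishes. -/
def Acyclic (M : Z2Cx R) : Prop := IsZero (H0 R M) ∧ IsZero (H1 R M)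

end Z2Cx

namespace Z2Cx

variable {R}

/-- A short exact sequence of `ℤ/2`-graded complexes, exhibiting an extension of `M` by `N`
(short exactness of a sequence of complexes is componentwise short exactness). -/
structure ExtSES (M N : Z2Cx R) where
  E : Z2Cx R
  i : N ⟶ E
  p : E ⟶ M
  w0 : Hom.f0 i ≫ Hom.f0 p = 0
  w1 : Hom.f1 i ≫ Hom.f1 p = 0
  ex0 : (ShortComplex.mk (Hom.f0 i) (Hom.f0 p) w0).ShortExact
  ex1 : (ShortComplex.mk (Hom.f1 i) (Hom.f1 p) w1).ShortExact

/-- Equivalence of extensions of complexes. -/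
def ExtEquiv (M N : Z2Cx R) (s t : ExtSES M N) : Prop :=
  ∃ φ : s.E ≅ t.E, s.i ≫ φ.hom = t.i ∧ φ.hom ≫ t.p = s.p

/-- The set `Ext¹_{C(R)}(M•, N•)` of equivalence classes of extensions of `M•` by `N•`
in the category of `ℤ/2`-graded complexes over `R`. -/
def ExtCl (M N : Z2Cx R) := Quot (ExtEquiv M N)

end Z2Cx

/-- Complexes of projectives with homology in the subcategory `A`, i.e. objects
of `C_fin(P)`. -/
def FinCx (M : Z2Cx R) : Prop :=
  Projective M.X0 ∧ Projective M.X1 ∧ IsFinHom R (Z2Cx.H0 R M) ∧ IsFinHom R (Z2Cx.H1 R M)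

attribute [local instance] Classical.propDecidable

/-- The class `[M•] = [M₀] - [M₁]` in `K(R)` of a `ℤ/2`-graded complex. -/
def clsOf (M : Z2Cx R) : K0 R := K0.cls R M.X0 - K0.cls R M.X1

/-- Isomorphism of `ℤ/2`-graded complexes, as a relation. -/
def cxRel (M N : Z2Cx R) : Prop := Nonempty (M ≅ N)

/-- Isomorphism classes of `ℤ/2`-graded complexes. -/
def CxCls := Quot (cxRel R)

/-- The isomorphism class of a complex. -/
def ccls (M : Z2Cx R) : CxCls R := Quot.mk _ M

/-- The isomorphism class of the middle term of an extension class. -/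
def extMid {M N : Z2Cx R} : Z2Cx.ExtCl M N → CxCls R :=
  Quot.lift (fun s => ccls R s.E) (fun s t h => by
    obtain ⟨φ, -, -⟩ := h
    exact Quot.sound ⟨φ⟩)

/-- `|Ext¹_{C(R)}(M•,N•)_{P•}|` : the number of extension classes of `M•` by `N•` whose
middle term has isomorphism class `c`. -/
def extCount (M N : Z2Cx R) (c : CxCls R) : ℕ :=
  Nat.card {x : Z2Cx.ExtCl M N // extMid R x = c}

/-- The `ℚ`-valued extension of the Euler form to `K(R) × K(R)`
(which exists by condition (d)). -/
structure EulerData where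
  eQ : K0 R →+ K0 R →+ ℚ
  compat : ∀ (M A : R), IsFinHom R A →
    eQ (K0.cls R M) (K0.cls R A) = euler k R M A

/-- A choice, for every complex of projectives `M•`, of the classes `[M₁⁺]` and `[M₀⁻]`
of the components of the canonical decomposition `M• = M•⁺ ⊕ M•⁻ = C_f ⊕ C_g^†`. -/
structure DecData where
  cplus : Z2Cx R → K0 R
  cminus : Z2Cx R → K0 R
  spec : ∀ M : Z2Cx R, Projective M.X0 → Projective M.X1 →
    ∃ (P Q P' Q' : R) (f : P ⟶ Q) (g : P' ⟶ Q'),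
      Projective P ∧ Projective Q ∧ Projective P' ∧ Projective Q' ∧
      Mono f ∧ Mono g ∧
      Nonempty (M ≅ Z2Cx.dsum R (Z2Cx.Cf R f) (Z2Cx.dagger R (Z2Cx.Cf R g))) ∧
      cplus M = K0.cls R P ∧ cminus M = K0.cls R P'

variable {k R}

/-- `μ(M•,N•) = Σ_{i,j} ⟨[Mᵢ^{ε(j)}], [N_{j+1}^{ε(i)}]⟩`. -/
def mu (ed : EulerData k R) (dd : DecData R) (M N : Z2Cx R) : ℚ :=
  ed.eQ (K0.cls R M.X0 - dd.cminus M) (dd.cplus N) +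
    ed.eQ (dd.cplus M) (K0.cls R N.X1 - dd.cplus N) +
    ed.eQ (dd.cminus M) (K0.cls R N.X0 - dd.cminus N) +
    ed.eQ (K0.cls R M.X1 - dd.cplus M) (dd.cminus N)

/-- `h(M•,N•) = q^{μ(M•,N•)} ⬝ |Hom_{C(R)}(H•(M•), H•(N•))|`. -/
def hVal (ed : EulerData k R) (dd : DecData R) (M N : Z2Cx R) : ℝ :=
  (Fintype.card k : ℝ) ^ ((mu ed dd M N : ℚ) : ℝ) *
    (Nat.card (Z2Cx.Hcx R M ⟶ Z2Cx.Hcx R N) : ℝ)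

/-- The structure constants of the Hall algebra `H(C_fin(P))`:
the coefficient of the basis element `c` in `[M•] ⋆ [N•]`. -/
def hallCoeff (v : ℝ) (ed : EulerData k R) (dd : DecData R) (M N : Z2Cx R)
    (c : CxCls R) : ℂ :=
  (((v ^ (((ed.eQ (K0.cls R M.X0) (K0.cls R N.X0) +
      ed.eQ (K0.cls R M.X1) (K0.cls R N.X1) : ℚ)) : ℝ) *
    (extCount R M N c : ℝ) / hVal ed dd M N : ℝ)) : ℂ)

variable (k R)

/-- Objects of `C_fin(P)`. -/
def FCx := {M : Z2Cx R // FinCx R M}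

/-- Isomorphism classes of objects of `C_fin(P)`. -/
def FCls := Quot (fun M N : FCx R => Nonempty (M.1 ≅ N.1))

/-- The isomorphism class of an object of `C_fin(P)`. -/
def fcls (M : FCx R) : FCls R := Quot.mk _ M

/-- Comparison of isomorphism classes in `C_fin(P)` with isomorphism classes of
arbitrary complexes. -/
def fc2c : FCls R → CxCls R :=
  Quot.lift (fun M => ccls R M.1) (fun _ _ h => Quot.sound h)

/-- The symmetrized Euler form `(α,β) = ⟨α,β⟩ + ⟨β,α⟩`. -/
def sForm (ed : EulerData k R) (a b : K0 R) : ℚ := ed.eQ a b + ed.eQ b a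

open ZeroObject in
/-- The zero complex. -/
def zeroCx : Z2Cx R := ⟨0, 0, 0, 0, by simp, by simp⟩

/-- All the data constituting the localized Hall algebra `DH(R)`:
the Hall algebra `H(C_fin(P))` (a free `ℂ`-module on the isomorphism classes of
`C_fin(P)`, with the Hall multiplication `mulH` determined by the structure constants
`hallCoeff`), and its localization `D` at the classes of acyclic complexes, together
with the elements `K_α ⋆ K_β^† = KK (α, β)` and the canonical map `loc`.  The axioms
express that `D` is precisely the localization of `H(C_fin(P))` at the classes of
acyclic complexes, with the `ℂ[K(R) × K(R)]`-bimodule structure of the paper. -/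
structure DHSetting where
  v : ℝ
  v_pos : 0 < v
  v_sq : v ^ 2 = (Fintype.card k : ℝ)
  ed : EulerData k R
  dd : DecData R
  /-- the Hall multiplication on `H(C_fin(P))` -/
  mulH : ((FCls R) →₀ ℂ) →ₗ[ℂ] ((FCls R) →₀ ℂ) →ₗ[ℂ] ((FCls R) →₀ ℂ)
  mulH_single : ∀ (M N : FCx R) (c : FCls R),
    (mulH (Finsupp.single (fcls R M) 1) (Finsupp.single (fcls R N) 1)) c
      = hallCoeff v ed dd M.1 N.1 (fc2c R c)
  /-- the carrier of the localized Hall algebra `DH(R)` -/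
  D : Type u
  [grp : AddCommGroup D]
  [mod : Module ℂ D]
  /-- the multiplication `⋆` of `DH(R)` -/
  mulD : D →ₗ[ℂ] D →ₗ[ℂ] D
  one : D
  one_mul : ∀ d, mulD one d = d
  mul_one : ∀ d, mulD d one = d
  /-- the canonical map `H(C_fin(P)) → DH(R)` -/
  loc : ((FCls R) →₀ ℂ) →ₗ[ℂ] D
  loc_one : ∀ h : FinCx R (zeroCx R),
    loc (Finsupp.single (fcls R ⟨zeroCx R, h⟩) 1) = one
  loc_mul : ∀ x y, mulD (loc x) (loc y) = loc (mulH x y)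
  /-- the elements `K_α ⋆ K_β^†` -/
  KK : K0 R × K0 R → D
  KK_zero : KK 0 = one
  KK_mul : ∀ a b, mulD (KK a) (KK b) = KK (a + b)
  KK_P : ∀ (P : R), Projective P → ∀ h : FinCx R (Z2Cx.KP R P),
    loc (Finsupp.single (fcls R ⟨Z2Cx.KP R P, h⟩) 1) = KK (K0.cls R P, 0)
  KK_Pd : ∀ (P : R), Projective P → ∀ h : FinCx R (Z2Cx.dagger R (Z2Cx.KP R P)),
    loc (Finsupp.single (fcls R ⟨Z2Cx.dagger R (Z2Cx.KP R P), h⟩) 1) = KK (0, K0.cls R P)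
  /-- the bimodule rule `(K_α ⋆ K_β^†) ⋆ [M•] = v^{(α-β,[M•])} [M•] ⋆ (K_α ⋆ K_β^†)` -/
  comm_rule : ∀ (a b : K0 R) (M : FCx R),
    mulD (KK (a, b)) (loc (Finsupp.single (fcls R M) 1)) =
      (((v ^ ((sForm k R ed (a - b) (clsOf R M.1) : ℚ) : ℝ) : ℝ) : ℂ)) •
        mulD (loc (Finsupp.single (fcls R M) 1)) (KK (a, b))
  /-- multiplication of elements in standard form is induced by the Hall multiplication -/
  mul_general : ∀ (x : (FCls R) →₀ ℂ) (M : FCx R) (a b a' b' : K0 R),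
    mulD (mulD (loc x) (KK (a, b))) (mulD (loc (Finsupp.single (fcls R M) 1)) (KK (a', b'))) =
      (((v ^ ((sForm k R ed (a - b) (clsOf R M.1) : ℚ) : ℝ) : ℝ) : ℂ)) •
        mulD (loc (mulH x (Finsupp.single (fcls R M) 1))) (KK (a + a', b + b'))
  /-- every element of the localization has the standard form `x ⋆ K_α ⋆ K_β^†` -/
  span : ∀ d : D, ∃ (x : (FCls R) →₀ ℂ) (a b : K0 R), d = mulD (loc x) (KK (a, b))
  /-- the kernel of the localization map is exactly the torsion with respect to the
  classes of acyclic complexes -/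
  loc_ker : ∀ x, loc x = 0 ↔ ∃ (K : Z2Cx R) (h : FinCx R K),
    Z2Cx.Acyclic R K ∧ mulH x (Finsupp.single (fcls R ⟨K, h⟩) 1) = 0

attribute [instance] DHSetting.grp DHSetting.mod

variable {k R}

/-- The element `E_{M•} = v^{⟨[M₁⁺]-[M₀⁻],[M•]⟩} K_{-[M₁⁺]} ⋆ K^†_{-[M₀⁻]} ⋆ [M•]`
of the localized Hall algebra. -/
def Eelt (S : DHSetting k R) (M : Z2Cx R) (h : FinCx R M) : S.D :=
  (((S.v ^ ((S.ed.eQ (S.dd.cplus M - S.dd.cminus M) (clsOf R M) : ℚ) : ℝ) : ℝ) : ℂ)) •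
    S.mulD (S.KK (-(S.dd.cplus M), -(S.dd.cminus M)))
      (S.loc (Finsupp.single (fcls R ⟨M, h⟩) 1))

/-! Write `M` and `N` for the complexes `C_{A₁}` and `C_{A₂}^†`. An extension of `M` by `N` splits
in each degree because `M` consists of projectives, and the failure of a degreewise section to be a
chain map is a morphism `M ⟶ N†` whose null-homotopies are the corrections of that section. So
`Ext¹(M, N)` is trivial as soon as all morphisms `M ⟶ N†` are null-homotopic; here these are
morphisms of projective resolutions `C_{A₁} ⟶ C_{A₂}`, which lift morphisms `A₁ ⟶ A₂`, all of them
zero. The same holds with `M` and `N` exchanged, so both `[M] ⋆ [N]` and `[N] ⋆ [M]` are multiples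
of `[M ⊕ N]`. The ratio of the two coefficients is a power of `v`, which is cancelled exactly by the
powers of `v` that arise when the factors `K` and `K†` of `E_M` and `E_N` are moved to one side. -/

section

omit [EnoughProjectives R]

namespace K0

lemma cls_eq_add_of_shortExact {T : ShortComplex R} (hT : T.ShortExact) :
    cls R T.X₂ = cls R T.X₁ + cls R T.X₃ := by
  have hrel : FreeAbelianGroup.of T.X₂ - FreeAbelianGroup.of T.X₁ - FreeAbelianGroup.of T.X₃ ∈
      AddSubgroup.closure (sesSet R) := AddSubgroup.subset_closure ⟨T, hT, rfl⟩
  have hzero : cls R T.X₂ - cls R T.X₁ - cls R T.X₃ = 0 := (QuotientAddGroup.eq_zero_iff _).2 hrel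
  rwa [sub_sub, sub_eq_zero] at hzero

lemma cls_eq_add_of_iso_of_isZero {X Y Z : R} (e : X ≅ Y) (hZ : IsZero Z) :
    cls R Y = cls R X + cls R Z :=
  cls_eq_add_of_shortExact (T := .mk e.hom (0 : Y ⟶ Z) comp_zero)
    (ShortComplex.Splitting.ofIsIsoOfIsZero _ e.isIso_hom hZ).shortExact

lemma cls_eq_zero_of_isZero {Z : R} (hZ : IsZero Z) : cls R Z = 0 :=
  left_eq_add.1 (cls_eq_add_of_iso_of_isZero (Iso.refl Z) hZ)

lemma cls_eq_of_iso {X Y : R} (e : X ≅ Y) : cls R X = cls R Y := by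
  obtain ⟨Z, hZ⟩ := HasZeroObject.zero (C := R)
  rw [cls_eq_add_of_iso_of_isZero e hZ, cls_eq_zero_of_isZero hZ, add_zero]

lemma cls_image_eq_of_fac {X Y I : R} {f : X ⟶ Y} (e : X ⟶ I) (m : I ⟶ Y) [Epi e] [Mono m]
    (fac : e ≫ m = f) : cls R (image f) = cls R I := by
  have := strongEpi_of_epi e
  exact (cls_eq_of_iso (image.isoStrongEpiMono e m fac)).symm

lemma cls_image_of_mono {X Y : R} (f : X ⟶ Y) [Mono f] : cls R (image f) = cls R X :=
  cls_eq_of_iso (imageMonoIsoSource f)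

open ZeroObject in
lemma cls_image_zero {X Y : R} : cls R (image (0 : X ⟶ Y)) = 0 :=
  (cls_eq_of_iso imageZero).trans (cls_eq_zero_of_isZero (isZero_zero R))

end K0

namespace Z2Cx

variable {M N : Z2Cx R}

instance isIso_f0 (φ : M ⟶ N) [IsIso φ] : IsIso (Hom.f0 φ) :=
  ⟨Hom.f0 (inv φ), congrArg Hom.f0 (IsIso.hom_inv_id φ), congrArg Hom.f0 (IsIso.inv_hom_id φ)⟩

instance isIso_f1 (φ : M ⟶ N) [IsIso φ] : IsIso (Hom.f1 φ) :=
  ⟨Hom.f1 (inv φ), congrArg Hom.f1 (IsIso.hom_inv_id φ), congrArg Hom.f1 (IsIso.inv_hom_id φ)⟩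

lemma d0_eq_of_iso (e : M ≅ N) : Hom.f0 e.hom ≫ N.d0 ≫ Hom.f1 e.inv = M.d0 := by
  have hinv : Hom.f1 e.hom ≫ Hom.f1 e.inv = 𝟙 M.X1 := congrArg Hom.f1 e.hom_inv_id
  rw [← Category.assoc, ← Hom.comm0 e.hom, Category.assoc, hinv, Category.comp_id]

lemma d1_eq_of_iso (e : M ≅ N) : Hom.f1 e.hom ≫ N.d1 ≫ Hom.f0 e.inv = M.d1 := by
  have hinv : Hom.f0 e.hom ≫ Hom.f0 e.inv = 𝟙 M.X0 := congrArg Hom.f0 e.hom_inv_id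
  rw [← Category.assoc, ← Hom.comm1 e.hom, Category.assoc, hinv, Category.comp_id]

/-- The isomorphism of complexes with given components. -/
def isoMk (e₀ : M.X0 ≅ N.X0) (e₁ : M.X1 ≅ N.X1) (comm0 : M.d0 ≫ e₁.hom = e₀.hom ≫ N.d0)
    (comm1 : M.d1 ≫ e₀.hom = e₁.hom ≫ N.d1) : M ≅ N where
  hom := ⟨e₀.hom, e₁.hom, comm0, comm1⟩
  inv := ⟨e₀.inv, e₁.inv, by rw [Iso.comp_inv_eq, Category.assoc, comm0, Iso.inv_hom_id_assoc],
    by rw [Iso.comp_inv_eq, Category.assoc, comm1, Iso.inv_hom_id_assoc]⟩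
  hom_inv_id := Hom.ext e₀.hom_inv_id e₁.hom_inv_id
  inv_hom_id := Hom.ext e₀.inv_hom_id e₁.inv_hom_id

lemma dagger_dagger (M : Z2Cx R) : dagger R (dagger R M) = M := by
  have h₀ : (dagger R (dagger R M)).d0 = M.d0 := neg_neg M.d0
  have h₁ : (dagger R (dagger R M)).d1 = M.d1 := neg_neg M.d1
  cases M
  exact (mk.injEq ..).mpr ⟨rfl, rfl, heq_of_eq h₀, heq_of_eq h₁⟩

instance {P Q : R} (f : P ⟶ Q) [Projective Q] : Projective (Cf R f).X0 := ‹Projective Q›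

instance {P Q : R} (f : P ⟶ Q) [Projective P] : Projective (Cf R f).X1 := ‹Projective P›

instance [Projective M.X1] : Projective (dagger R M).X0 := ‹Projective M.X1›

instance [Projective M.X0] : Projective (dagger R M).X1 := ‹Projective M.X0›

lemma ccls_dsum_comm (M N : Z2Cx R) : ccls R (dsum R M N) = ccls R (dsum R N M) :=
  Quot.sound ⟨isoMk (biprod.braiding _ _) (biprod.braiding _ _)
    (by dsimp only [dsum]; ext <;> simp) (by dsimp only [dsum]; ext <;> simp)⟩

end Z2Cx

namespace DecData

variable (dd : DecData R) (M : Z2Cx R) [Projective M.X0] [Projective M.X1]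

lemma cplus_eq_cls_image : dd.cplus M = K0.cls R (image M.d1) := by
  obtain ⟨P, Q, P', Q', f, g, -, -, -, -, _, -, ⟨e⟩, hplus, -⟩ := dd.spec M ‹_› ‹_›
  let e₁ : M.X1 ⟶ P ⊞ Q' := Z2Cx.Hom.f1 e.hom
  let e₀ : Q ⊞ P' ⟶ M.X0 := Z2Cx.Hom.f0 e.inv
  have : IsIso e₁ := Z2Cx.isIso_f1 e.hom
  have : IsIso e₀ := Z2Cx.isIso_f0 e.inv
  have hd : e₁ ≫ biprod.map f (-0) ≫ e₀ = M.d1 := Z2Cx.d1_eq_of_iso e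
  have hmap : biprod.map f (-0 : Q' ⟶ P') = biprod.fst ≫ f ≫ biprod.inl := by ext <;> simp
  rw [hplus, K0.cls_image_eq_of_fac (e₁ ≫ biprod.fst) (f ≫ biprod.inl ≫ e₀)]
  simp only [← hd, hmap, Category.assoc]

lemma cminus_eq_cls_image : dd.cminus M = K0.cls R (image M.d0) := by
  obtain ⟨P, Q, P', Q', f, g, -, -, -, -, -, _, ⟨e⟩, -, hminus⟩ := dd.spec M ‹_› ‹_›
  let e₀ : M.X0 ⟶ Q ⊞ P' := Z2Cx.Hom.f0 e.hom
  let e₁ : P ⊞ Q' ⟶ M.X1 := Z2Cx.Hom.f1 e.inv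
  have : IsIso e₀ := Z2Cx.isIso_f0 e.hom
  have : IsIso e₁ := Z2Cx.isIso_f1 e.inv
  have hd : e₀ ≫ biprod.map 0 (-g) ≫ e₁ = M.d0 := Z2Cx.d0_eq_of_iso e
  have hmap : biprod.map (0 : Q ⟶ P) (-g) = biprod.snd ≫ (-g) ≫ biprod.inr := by ext <;> simp
  rw [hminus, K0.cls_image_eq_of_fac (e₀ ≫ biprod.snd) ((-g) ≫ biprod.inr ≫ e₁)]
  simp only [← hd, hmap, Category.assoc]

section Resolutions

variable {P Q : R} [Projective P] [Projective Q] (f : P ⟶ Q)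

lemma cplus_Cf [Mono f] : dd.cplus (Z2Cx.Cf R f) = K0.cls R P :=
  (dd.cplus_eq_cls_image (Z2Cx.Cf R f)).trans (K0.cls_image_of_mono f)

lemma cminus_Cf : dd.cminus (Z2Cx.Cf R f) = 0 :=
  (dd.cminus_eq_cls_image (Z2Cx.Cf R f)).trans K0.cls_image_zero

lemma cplus_dagger_Cf : dd.cplus (Z2Cx.dagger R (Z2Cx.Cf R f)) = 0 := by
  rw [cplus_eq_cls_image]
  simp only [Z2Cx.dagger, Z2Cx.Cf, neg_zero, K0.cls_image_zero]

lemma cminus_dagger_Cf [Mono f] : dd.cminus (Z2Cx.dagger R (Z2Cx.Cf R f)) = K0.cls R P :=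
  (dd.cminus_eq_cls_image (Z2Cx.dagger R (Z2Cx.Cf R f))).trans (K0.cls_image_of_mono (-f))

end Resolutions

end DecData

namespace Z2Cx

variable {M N : Z2Cx R}

section Resolutions

variable {P Q : R} (f : P ⟶ Q) [Mono f]

lemma isZero_H1_Cf : IsZero (H1 R (Cf R f)) :=
  (ShortComplex.exact_iff_isZero_homology _).1 ((ShortComplex.exact_iff_mono _ rfl).2 ‹Mono f›)

lemma isZero_H0_dagger_Cf : IsZero (H0 R (dagger R (Cf R f))) :=
  (ShortComplex.exact_iff_isZero_homology _).1
    ((ShortComplex.exact_iff_mono _ neg_zero).2 (inferInstanceAs (Mono (-f))))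

lemma natCard_hom_Hcx_eq_one (h0 : Subsingleton (H0 R M ⟶ H0 R N))
    (h1 : Subsingleton (H1 R M ⟶ H1 R N)) : Nat.card (Hcx R M ⟶ Hcx R N) = 1 :=
  Nat.card_eq_one_iff_unique.2
    ⟨⟨fun _ _ => Hom.ext (h0.elim _ _) (h1.elim _ _)⟩,
      ⟨⟨0, 0, zero_comp.trans comp_zero.symm, zero_comp.trans comp_zero.symm⟩⟩⟩

lemma natCard_hom_Hcx_Cf_dagger_Cf {P' Q' : R} (g : P' ⟶ Q') [Mono g] :
    Nat.card (Hcx R (Cf R f) ⟶ Hcx R (dagger R (Cf R g))) = 1 :=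
  natCard_hom_Hcx_eq_one ⟨(isZero_H0_dagger_Cf g).eq_of_tgt⟩ ⟨(isZero_H1_Cf f).eq_of_src⟩

lemma natCard_hom_Hcx_dagger_Cf_Cf {P' Q' : R} (g : P' ⟶ Q') [Mono g] :
    Nat.card (Hcx R (dagger R (Cf R g)) ⟶ Hcx R (Cf R f)) = 1 :=
  natCard_hom_Hcx_eq_one ⟨(isZero_H0_dagger_Cf g).eq_of_src⟩ ⟨(isZero_H1_Cf f).eq_of_tgt⟩

end Resolutions

/-- A morphism of `ℤ/2`-graded complexes is null-homotopic if it has the form `d ≫ s + s ≫ d` for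
some morphism `s` of degree one. -/
def NullHomotopic (φ : M ⟶ N) : Prop :=
  ∃ (s₀ : M.X0 ⟶ N.X1) (s₁ : M.X1 ⟶ N.X0),
    Hom.f0 φ = M.d0 ≫ s₁ + s₀ ≫ N.d1 ∧ Hom.f1 φ = M.d1 ≫ s₀ + s₁ ≫ N.d0

lemma nullHomotopic_dagger (h : ∀ φ : M ⟶ N, NullHomotopic φ)
    (φ : dagger R M ⟶ dagger R N) : NullHomotopic φ := by
  let a : M.X0 ⟶ N.X0 := Hom.f1 φ
  let b : M.X1 ⟶ N.X1 := Hom.f0 φ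
  have hab : (-M.d0) ≫ b = a ≫ (-N.d0) := Hom.comm1 φ
  have hba : (-M.d1) ≫ a = b ≫ (-N.d1) := Hom.comm0 φ
  obtain ⟨s₀, s₁, ha, hb⟩ := h ⟨a, b, by simpa using hab, by simpa using hba⟩
  have hb' : b = (-M.d1) ≫ (-s₀) + (-s₁) ≫ (-N.d0) := by simpa using hb
  have ha' : a = (-M.d0) ≫ (-s₁) + (-s₀) ≫ (-N.d1) := by simpa using ha
  exact ⟨-s₁, -s₀, hb', ha'⟩

lemma nullHomotopic_Cf {T₁ T₂ : ShortComplex R} (hT₁ : T₁.Exact) [Epi T₁.g] (hT₂ : T₂.Exact)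
    [Mono T₂.f] (h : ∀ g : T₁.X₃ ⟶ T₂.X₃, g = 0) (φ : Cf R T₁.f ⟶ Cf R T₂.f) :
    NullHomotopic φ := by
  let b : T₁.X₂ ⟶ T₂.X₂ := Hom.f0 φ
  let a : T₁.X₁ ⟶ T₂.X₁ := Hom.f1 φ
  have hab : T₁.f ≫ b = a ≫ T₂.f := Hom.comm1 φ
  have hb : b ≫ T₂.g = 0 := by
    rw [← hT₁.g_desc (b ≫ T₂.g) (by rw [reassoc_of% hab, T₂.zero, comp_zero]), h (hT₁.desc _ _),
      comp_zero]
  obtain ⟨s, hs⟩ := hT₂.lift' b hb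
  have ha : T₁.f ≫ s = a := by rw [← cancel_mono T₂.f, Category.assoc, hs, hab]
  have hb₀ : b = (0 : T₁.X₂ ⟶ T₁.X₁) ≫ (0 : T₁.X₁ ⟶ T₂.X₂) + s ≫ T₂.f := by simp [hs]
  have ha₁ : a = T₁.f ≫ s + (0 : T₁.X₁ ⟶ T₂.X₂) ≫ (0 : T₂.X₂ ⟶ T₂.X₁) := by simp [ha]
  exact ⟨s, 0, hb₀, ha₁⟩

/-- The trivial extension `N ⟶ N ⊕ M ⟶ M`. -/
def splitExt (M N : Z2Cx R) : ExtSES M N where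
  E := dsum R N M
  i := ⟨biprod.inl, biprod.inl, by simp [dsum], by simp [dsum]⟩
  p := ⟨biprod.snd, biprod.snd, by simp [dsum], by simp [dsum]⟩
  w0 := biprod.inl_snd
  w1 := biprod.inl_snd
  ex0 := (ShortComplex.Splitting.ofHasBinaryBiproduct N.X0 M.X0).shortExact
  ex1 := (ShortComplex.Splitting.ofHasBinaryBiproduct N.X1 M.X1).shortExact

lemma extEquiv_splitExt_of_section {s : ExtSES M N} (σ : M ⟶ s.E) (hσ : σ ≫ s.p = 𝟙 M) :
    ExtEquiv M N (splitExt M N) s := by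
  have hσ₀ : Hom.f0 σ ≫ Hom.f0 s.p = 𝟙 M.X0 := congrArg Hom.f0 hσ
  have hσ₁ : Hom.f1 σ ≫ Hom.f1 s.p = 𝟙 M.X1 := congrArg Hom.f1 hσ
  let e₀ := (ShortComplex.Splitting.ofExactOfSection _ s.ex0.exact _ hσ₀
    s.ex0.mono_f).isoBinaryBiproduct.symm
  let e₁ := (ShortComplex.Splitting.ofExactOfSection _ s.ex1.exact _ hσ₁
    s.ex1.mono_f).isoBinaryBiproduct.symm
  have he₀ : e₀.hom = biprod.desc (Hom.f0 s.i) (Hom.f0 σ) := rfl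
  have he₁ : e₁.hom = biprod.desc (Hom.f1 s.i) (Hom.f1 σ) := rfl
  refine ⟨isoMk e₀ e₁ ?_ ?_, Hom.ext (biprod.inl_desc _ _) (biprod.inl_desc _ _),
    Hom.ext ?_ ?_⟩
  · rw [he₀, he₁]; dsimp only [splitExt, dsum]; ext <;> simp [Hom.comm0]
  · rw [he₀, he₁]; dsimp only [splitExt, dsum]; ext <;> simp [Hom.comm1]
  · change e₀.hom ≫ Hom.f0 s.p = biprod.snd
    rw [he₀]; ext <;> simp [hσ₀, s.w0]
  · change e₁.hom ≫ Hom.f1 s.p = biprod.snd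
    rw [he₁]; ext <;> simp [hσ₁, s.w1]

lemma ExtSES.exists_hom_dagger (s : ExtSES M N) {σ₀ : M.X0 ⟶ s.E.X0} {σ₁ : M.X1 ⟶ s.E.X1}
    (hσ₀ : σ₀ ≫ Hom.f0 s.p = 𝟙 _) (hσ₁ : σ₁ ≫ Hom.f1 s.p = 𝟙 _) :
    ∃ φ : M ⟶ dagger R N, Hom.f0 φ ≫ Hom.f1 s.i = σ₀ ≫ s.E.d0 - M.d0 ≫ σ₁ ∧
      Hom.f1 φ ≫ Hom.f0 s.i = σ₁ ≫ s.E.d1 - M.d1 ≫ σ₀ := by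
  have : Mono (Hom.f0 s.i) := s.ex0.mono_f
  have : Mono (Hom.f1 s.i) := s.ex1.mono_f
  obtain ⟨φ₀, hφ₀⟩ : ∃ φ₀ : M.X0 ⟶ N.X1, φ₀ ≫ Hom.f1 s.i = σ₀ ≫ s.E.d0 - M.d0 ≫ σ₁ :=
    s.ex1.exact.lift' _ (by simp [Hom.comm0, hσ₁, reassoc_of% hσ₀])
  obtain ⟨φ₁, hφ₁⟩ : ∃ φ₁ : M.X1 ⟶ N.X0, φ₁ ≫ Hom.f0 s.i = σ₁ ≫ s.E.d1 - M.d1 ≫ σ₀ :=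
    s.ex0.exact.lift' _ (by simp [Hom.comm1, hσ₀, reassoc_of% hσ₁])
  refine ⟨⟨φ₀, φ₁, ?_, ?_⟩, hφ₀, hφ₁⟩
  · change M.d0 ≫ φ₁ = φ₀ ≫ (-N.d1)
    rw [← cancel_mono (Hom.f0 s.i)]
    simp [hφ₁, Hom.comm1, reassoc_of% hφ₀, reassoc_of% M.d01, s.E.d01]
  · change M.d1 ≫ φ₀ = φ₁ ≫ (-N.d0)
    rw [← cancel_mono (Hom.f1 s.i)]
    simp [hφ₀, Hom.comm0, reassoc_of% hφ₁, reassoc_of% M.d10, s.E.d10]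

lemma ExtSES.exists_section [Projective M.X0] [Projective M.X1]
    (h : ∀ φ : M ⟶ dagger R N, NullHomotopic φ) (s : ExtSES M N) :
    ∃ σ : M ⟶ s.E, σ ≫ s.p = 𝟙 M := by
  have : Epi (Hom.f0 s.p) := s.ex0.epi_g
  have : Epi (Hom.f1 s.p) := s.ex1.epi_g
  let σ₀ := Projective.factorThru (𝟙 M.X0) (Hom.f0 s.p)
  let σ₁ := Projective.factorThru (𝟙 M.X1) (Hom.f1 s.p)
  have hσ₀ : σ₀ ≫ Hom.f0 s.p = 𝟙 _ := Projective.factorThru_comp _ _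
  have hσ₁ : σ₁ ≫ Hom.f1 s.p = 𝟙 _ := Projective.factorThru_comp _ _
  obtain ⟨φ, hφ₀, hφ₁⟩ := s.exists_hom_dagger hσ₀ hσ₁
  obtain ⟨t₀, t₁, ht₀, ht₁⟩ : ∃ (t₀ : M.X0 ⟶ N.X0) (t₁ : M.X1 ⟶ N.X1),
      Hom.f0 φ = M.d0 ≫ t₁ + t₀ ≫ (-N.d0) ∧ Hom.f1 φ = M.d1 ≫ t₀ + t₁ ≫ (-N.d1) := h φ
  have hd₀ : σ₀ ≫ s.E.d0 = M.d0 ≫ σ₁ + (M.d0 ≫ t₁ + t₀ ≫ (-N.d0)) ≫ Hom.f1 s.i := by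
    rw [← sub_eq_iff_eq_add', ← hφ₀]
    exact congrArg (· ≫ Hom.f1 s.i) ht₀
  have hd₁ : σ₁ ≫ s.E.d1 = M.d1 ≫ σ₀ + (M.d1 ≫ t₀ + t₁ ≫ (-N.d1)) ≫ Hom.f0 s.i := by
    rw [← sub_eq_iff_eq_add', ← hφ₁]
    exact congrArg (· ≫ Hom.f0 s.i) ht₁
  refine ⟨⟨σ₀ + t₀ ≫ Hom.f0 s.i, σ₁ + t₁ ≫ Hom.f1 s.i, ?_, ?_⟩, Hom.ext ?_ ?_⟩
  · simp only [Preadditive.add_comp, Preadditive.comp_add, Preadditive.comp_neg,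
      Preadditive.neg_comp, Category.assoc, hd₀, ← Hom.comm0]
    abel
  · simp only [Preadditive.add_comp, Preadditive.comp_add, Preadditive.comp_neg,
      Preadditive.neg_comp, Category.assoc, hd₁, ← Hom.comm1]
    abel
  · change (σ₀ + t₀ ≫ Hom.f0 s.i) ≫ Hom.f0 s.p = 𝟙 _
    simp [hσ₀, s.w0]
  · change (σ₁ + t₁ ≫ Hom.f1 s.i) ≫ Hom.f1 s.p = 𝟙 _
    simp [hσ₁, s.w1]

lemma ExtCl.eq_mk_splitExt [Projective M.X0] [Projective M.X1]
    (h : ∀ φ : M ⟶ dagger R N, NullHomotopic φ) (x : ExtCl M N) :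
    x = Quot.mk _ (splitExt M N) := by
  obtain ⟨s⟩ := x
  obtain ⟨σ, hσ⟩ := s.exists_section h
  exact (Quot.sound (extEquiv_splitExt_of_section σ hσ)).symm

end Z2Cx

lemma extCount_eq_ite {M N : Z2Cx R} [Projective M.X0] [Projective M.X1]
    (h : ∀ φ : M ⟶ Z2Cx.dagger R N, Z2Cx.NullHomotopic φ) (c : CxCls R) :
    extCount R M N c = if ccls R (Z2Cx.dsum R N M) = c then 1 else 0 := by
  have hmid (x : Z2Cx.ExtCl M N) : extMid R x = ccls R (Z2Cx.dsum R N M) := by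
    rw [Z2Cx.ExtCl.eq_mk_splitExt h x]; rfl
  have : Unique (Z2Cx.ExtCl M N) := ⟨⟨Quot.mk _ _⟩, Z2Cx.ExtCl.eq_mk_splitExt h⟩
  simp only [extCount, hmid]
  split_ifs with hc
  · simp [hc]
  · simp [hc]

lemma extCount_comm {M N : Z2Cx R} [Projective M.X0] [Projective M.X1] [Projective N.X0]
    [Projective N.X1] (hMN : ∀ φ : M ⟶ Z2Cx.dagger R N, Z2Cx.NullHomotopic φ)
    (hNM : ∀ φ : N ⟶ Z2Cx.dagger R M, Z2Cx.NullHomotopic φ) (c : CxCls R) :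
    extCount R M N c = extCount R N M c := by
  rw [extCount_eq_ite hMN, extCount_eq_ite hNM, Z2Cx.ccls_dsum_comm]

lemma extCount_Cf_dagger_Cf_comm {T₁ T₂ : ShortComplex R} (hT₁ : T₁.ShortExact)
    (hT₂ : T₂.ShortExact) [Projective T₁.X₁] [Projective T₁.X₂] [Projective T₂.X₁]
    [Projective T₂.X₂] (h₁₂ : ∀ g : T₁.X₃ ⟶ T₂.X₃, g = 0) (h₂₁ : ∀ g : T₂.X₃ ⟶ T₁.X₃, g = 0)
    (c : CxCls R) :
    extCount R (Z2Cx.Cf R T₁.f) (Z2Cx.dagger R (Z2Cx.Cf R T₂.f)) c =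
      extCount R (Z2Cx.dagger R (Z2Cx.Cf R T₂.f)) (Z2Cx.Cf R T₁.f) c := by
  have := hT₁.mono_f
  have := hT₂.mono_f
  have := hT₁.epi_g
  have := hT₂.epi_g
  refine extCount_comm ?_
    (Z2Cx.nullHomotopic_dagger (Z2Cx.nullHomotopic_Cf hT₂.exact hT₁.exact h₂₁)) c
  rw [Z2Cx.dagger_dagger]
  exact Z2Cx.nullHomotopic_Cf hT₁.exact hT₂.exact h₁₂

end

/-- The basis element `[M•]` of the Hall algebra `H(C_fin(P))`. -/
abbrev hallCls (M : FCx R) : FCls R →₀ ℂ := Finsupp.single (fcls R M) 1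

namespace DHSetting

variable (S : DHSetting k R)

/-- The scalar `v ^ r` of `DH(R)`. -/
def vpow (r : ℚ) : ℂ := ((S.v ^ (r : ℝ) : ℝ) : ℂ)

lemma vpow_add (r s : ℚ) : S.vpow (r + s) = S.vpow r * S.vpow s := by
  rw [vpow, Rat.cast_add, Real.rpow_add S.v_pos, Complex.ofReal_mul]; rfl

/-- The exponent of `v` in `[M•] ⋆ [N•]`: that of the twist `v^{⟨[M₀],[N₀]⟩+⟨[M₁],[N₁]⟩}` minus
that of the factor `q^μ = v^{2μ}` of `h(M•,N•)`. -/
def hallExponent (M N : Z2Cx R) : ℚ :=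
  S.ed.eQ (K0.cls R M.X0) (K0.cls R N.X0) + S.ed.eQ (K0.cls R M.X1) (K0.cls R N.X1) -
    2 * mu S.ed S.dd M N

lemma hallCoeff_eq (M N : Z2Cx R) (c : CxCls R) :
    hallCoeff S.v S.ed S.dd M N c = S.vpow (S.hallExponent M N) *
      (extCount R M N c / Nat.card (Z2Cx.Hcx R M ⟶ Z2Cx.Hcx R N)) := by
  have hq : (Fintype.card k : ℝ) ^ (mu S.ed S.dd M N : ℝ) =
      S.v ^ (2 * (mu S.ed S.dd M N : ℝ)) := by
    rw [← S.v_sq, Real.rpow_mul S.v_pos.le, Real.rpow_two]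
  rw [hallCoeff, hVal, hq, vpow, hallExponent, Rat.cast_sub, Real.rpow_sub S.v_pos]
  push_cast
  rw [mul_div_mul_comm]

lemma mulH_hallCls_comm {M N : FCx R}
    (hext : ∀ c, extCount R M.1 N.1 c = extCount R N.1 M.1 c)
    (hhom : Nat.card (Z2Cx.Hcx R M.1 ⟶ Z2Cx.Hcx R N.1) =
      Nat.card (Z2Cx.Hcx R N.1 ⟶ Z2Cx.Hcx R M.1)) :
    S.mulH (hallCls M) (hallCls N) =
      S.vpow (S.hallExponent M.1 N.1 - S.hallExponent N.1 M.1) •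
        S.mulH (hallCls N) (hallCls M) := by
  ext c
  rw [Finsupp.smul_apply, S.mulH_single, S.mulH_single, hallCoeff_eq, hallCoeff_eq, hext, hhom,
    smul_eq_mul, ← mul_assoc, ← vpow_add, sub_add_cancel]

/-- The element `[M₁⁺] - [M₀⁻]` of `K(R)` by which `E_{M•}` is twisted. -/
def twist (M : Z2Cx R) : K0 R := S.dd.cplus M - S.dd.cminus M

lemma Eelt_eq (M : FCx R) :
    Eelt S M.1 M.2 = S.vpow (-S.ed.eQ (clsOf R M.1) (S.twist M.1)) •
      S.mulD (S.loc (hallCls M)) (S.KK (-S.dd.cplus M.1, -S.dd.cminus M.1)) := by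
  have hexp : S.ed.eQ (S.twist M.1) (clsOf R M.1) +
      sForm k R S.ed (-S.dd.cplus M.1 - -S.dd.cminus M.1) (clsOf R M.1) =
        -S.ed.eQ (clsOf R M.1) (S.twist M.1) := by
    rw [← neg_sub', ← twist, sForm, map_neg, map_neg, AddMonoidHom.neg_apply]
    ring
  rw [← hexp, vpow_add, mul_smul]
  exact congrArg (S.vpow (S.ed.eQ (S.twist M.1) (clsOf R M.1)) • ·) (S.comm_rule _ _ M)

lemma mulD_Eelt (M N : FCx R) :
    S.mulD (Eelt S M.1 M.2) (Eelt S N.1 N.2) =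
      S.vpow (-S.ed.eQ (clsOf R M.1) (S.twist M.1) - S.ed.eQ (clsOf R N.1) (S.twist N.1) -
          sForm k R S.ed (S.twist M.1) (clsOf R N.1)) •
        S.mulD (S.loc (S.mulH (hallCls M) (hallCls N)))
          (S.KK (-S.dd.cplus M.1 + -S.dd.cplus N.1, -S.dd.cminus M.1 + -S.dd.cminus N.1)) := by
  have hsForm : sForm k R S.ed (-S.dd.cplus M.1 - -S.dd.cminus M.1) (clsOf R N.1) =
      -sForm k R S.ed (S.twist M.1) (clsOf R N.1) := by
    rw [← neg_sub', ← twist, sForm, sForm, map_neg, map_neg, AddMonoidHom.neg_apply, neg_add]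
  rw [Eelt_eq, Eelt_eq, map_smul, map_smul, LinearMap.smul_apply, S.mul_general, hsForm, smul_smul,
    smul_smul, ← vpow, ← vpow_add, ← vpow_add]
  congr 2
  ring

lemma mulD_Eelt_comm {M N : FCx R}
    (h : S.mulH (hallCls M) (hallCls N) =
      S.vpow (sForm k R S.ed (S.twist M.1) (clsOf R N.1) -
        sForm k R S.ed (S.twist N.1) (clsOf R M.1)) • S.mulH (hallCls N) (hallCls M)) :
    S.mulD (Eelt S M.1 M.2) (Eelt S N.1 N.2) = S.mulD (Eelt S N.1 N.2) (Eelt S M.1 M.2) := by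
  rw [mulD_Eelt, mulD_Eelt, h, map_smul, map_smul, LinearMap.smul_apply, smul_smul, ← vpow_add,
    add_comm (-S.dd.cplus M.1), add_comm (-S.dd.cminus M.1)]
  congr 2
  ring

lemma hallExponent_sub_hallExponent {M N : Z2Cx R}
    (hM : S.dd.cplus M = K0.cls R M.X1 ∧ S.dd.cminus M = 0)
    (hN : S.dd.cplus N = 0 ∧ S.dd.cminus N = K0.cls R N.X0) :
    S.hallExponent M N - S.hallExponent N M =
      sForm k R S.ed (S.twist M) (clsOf R N) - sForm k R S.ed (S.twist N) (clsOf R M) := by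
  simp only [hallExponent, mu, sForm, twist, clsOf, hM.1, hM.2, hN.1, hN.2, map_sub, map_zero,
    map_neg, AddMonoidHom.sub_apply, AddMonoidHom.zero_apply, AddMonoidHom.neg_apply, sub_zero,
    zero_sub, sub_self]
  ring

end DHSetting

theorem stmt16_general (S : DHSetting k R) {T₁ T₂ : ShortComplex R} (hT₁ : T₁.ShortExact)
    (hT₂ : T₂.ShortExact) (hM : FinCx R (Z2Cx.Cf R T₁.f))
    (hN : FinCx R (Z2Cx.dagger R (Z2Cx.Cf R T₂.f))) (h₁₂ : ∀ g : T₁.X₃ ⟶ T₂.X₃, g = 0)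
    (h₂₁ : ∀ g : T₂.X₃ ⟶ T₁.X₃, g = 0) :
    S.mulD (Eelt S _ hM) (Eelt S _ hN) = S.mulD (Eelt S _ hN) (Eelt S _ hM) := by
  have := hT₁.mono_f
  have := hT₂.mono_f
  have : Projective T₁.X₂ := hM.1
  have : Projective T₁.X₁ := hM.2.1
  have : Projective T₂.X₁ := hN.1
  have : Projective T₂.X₂ := hN.2.1
  refine S.mulD_Eelt_comm (M := ⟨_, hM⟩) (N := ⟨_, hN⟩) ?_
  rw [← S.hallExponent_sub_hallExponent
    ⟨S.dd.cplus_Cf T₁.f, S.dd.cminus_Cf T₁.f⟩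
    ⟨S.dd.cplus_dagger_Cf T₂.f, S.dd.cminus_dagger_Cf T₂.f⟩]
  exact S.mulH_hallCls_comm (extCount_Cf_dagger_Cf_comm hT₁ hT₂ h₁₂ h₂₁)
    ((Z2Cx.natCard_hom_Hcx_Cf_dagger_Cf T₁.f T₂.f).trans
      (Z2Cx.natCard_hom_Hcx_dagger_Cf_Cf T₁.f T₂.f).symm)

theorem stmt16 (hH : Hereditary k R) (hc : CondC R) (hd : CondD R) (he : CondE R)
    (S : DHSetting k R)
    -- a fixed choice of projective resolution `0 → P_C → Q_C → C → 0` for each object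
    (rP rQ : R → R) (rf : ∀ C : R, rP C ⟶ rQ C) (rπ : ∀ C : R, rQ C ⟶ C)
    (hres : ∀ C : R, IsFinHom R C → Projective (rP C) ∧ Projective (rQ C) ∧
      ∃ w : rf C ≫ rπ C = 0, (ShortComplex.mk (rf C) (rπ C) w).ShortExact)
    (hfc : ∀ C : R, IsFinHom R C → FinCx R (Z2Cx.Cf R (rf C)))
    (hfcd : ∀ C : R, IsFinHom R C → FinCx R (Z2Cx.dagger R (Z2Cx.Cf R (rf C))))
    (A₁ A₂ : R) (hA₁ : IsFinHom R A₁) (hA₂ : IsFinHom R A₂)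
    (h12 : ∀ f : A₁ ⟶ A₂, f = 0) (h21 : ∀ f : A₂ ⟶ A₁, f = 0) :
    S.mulD (Eelt S (Z2Cx.Cf R (rf A₁)) (hfc A₁ hA₁))
        (Eelt S (Z2Cx.dagger R (Z2Cx.Cf R (rf A₂))) (hfcd A₂ hA₂)) =
      S.mulD (Eelt S (Z2Cx.dagger R (Z2Cx.Cf R (rf A₂))) (hfcd A₂ hA₂))
        (Eelt S (Z2Cx.Cf R (rf A₁)) (hfc A₁ hA₁)) := by
  obtain ⟨-, -, _, hex₁⟩ := hres A₁ hA₁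
  obtain ⟨-, -, _, hex₂⟩ := hres A₂ hA₂
  exact stmt16_general S hex₁ hex₂ _ _ h12 h21

end
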